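/- Let S ⊆ ℝ^d be a nonempty open convex set, let φ, f : ℝ^d → ℝ be twice continuously differentiable on S with φ convex on S, and let L > 0. Then |f(x) − f(y) − ⟨∇f(y), x − y⟩| ≤ L·D_φ(x, y) holds for all x, y ∈ S if and only if for every x ∈ S both matrices L∇²φ(x) + ∇²f(x) and L∇²φ(x) − ∇²f(x) are positive semidefinite. -/

import Mathlib

open scoped RealInnerProductSpace

/-!
Since `|a| ≤ b` means `0 ≤ b + a` and `0 ≤ b - a`, and the Bregman distance and the second
derivative are linear in the function, it suffices to treat `g = L φ + f` and `g = L φ - f`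
separately and to show that `D_g` is nonnegative on `S` iff the second derivative of `g` is positive
semidefinite. Adding `0 ≤ D_g(x, y)` and `0 ≤ D_g(y, x)` shows that the derivative of `g` is a
monotone operator, whose difference quotients are nonnegative; conversely, `g` is convex along
segments, so it lies above its tangents.
-/

theorem abs_le_iff_add_nonneg_and_sub_nonneg {α : Type*} [AddCommGroup α] [LinearOrder α]
    [IsOrderedAddMonoid α] {a b : α} : |a| ≤ b ↔ 0 ≤ b + a ∧ 0 ≤ b - a := by
  rw [abs_le, neg_le_iff_add_nonneg', sub_nonneg]

section Bregman

variable {E : Type*} [NormedAddCommGroup E] [NormedSpace ℝ E]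

/-- The Bregman distance `D_g(x, y)`. The derivative `g'` of `g` is an explicit argument and takes
values in the dual space, so that no inner product is needed. -/
def bregmanDist (g : E → ℝ) (g' : E → E →L[ℝ] ℝ) (x y : E) : ℝ :=
  g x - g y - g' y (x - y)

theorem bregmanDist_add (g k : E → ℝ) (g' k' : E → E →L[ℝ] ℝ) (x y : E) :
    bregmanDist (g + k) (g' + k') x y = bregmanDist g g' x y + bregmanDist k k' x y := by
  simp only [bregmanDist, Pi.add_apply, add_apply]
  ring

theorem bregmanDist_sub (g k : E → ℝ) (g' k' : E → E →L[ℝ] ℝ) (x y : E) :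
    bregmanDist (g - k) (g' - k') x y = bregmanDist g g' x y - bregmanDist k k' x y := by
  simp only [bregmanDist, Pi.sub_apply, sub_apply]
  ring

theorem bregmanDist_const_smul (c : ℝ) (g : E → ℝ) (g' : E → E →L[ℝ] ℝ) (x y : E) :
    bregmanDist (c • g) (c • g') x y = c * bregmanDist g g' x y := by
  simp only [bregmanDist, Pi.smul_apply, smul_apply, smul_eq_mul]
  ring

theorem bregmanDist_add_bregmanDist_swap (g : E → ℝ) (g' : E → E →L[ℝ] ℝ) (x y : E) :
    bregmanDist g g' x y + bregmanDist g g' y x = (g' x - g' y) (x - y) := by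
  simp only [bregmanDist, sub_apply, map_sub]
  ring

theorem fderiv_nonneg_of_eventually_monotone {T : E → E →L[ℝ] ℝ} {T' : E →L[ℝ] E →L[ℝ] ℝ}
    {x : E} (hT : HasFDerivAt T T' x)
    (hmono : ∀ᶠ y in nhds x, 0 ≤ (T y - T x) (y - x)) (h : E) : 0 ≤ T' h h := by
  have hquot : Filter.Tendsto (fun t : ℝ => t⁻¹ * (T (x + t • h) - T x) h)
      (nhdsWithin 0 {0}ᶜ) (nhds (T' h h)) :=
    ((ContinuousLinearMap.apply ℝ ℝ h).continuous.tendsto _).comp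
      (hT.hasLineDerivAt h).tendsto_slope_zero
  have hline : Filter.Tendsto (fun t : ℝ => x + t • h) (nhdsWithin 0 {0}ᶜ) (nhds x) := by
    have hcont : Continuous fun t : ℝ => x + t • h := by fun_prop
    simpa using (hcont.tendsto 0).mono_left nhdsWithin_le_nhds
  refine ge_of_tendsto hquot ?_
  filter_upwards [hline.eventually hmono] with t ht
  rw [add_sub_cancel_left, map_smul, smul_eq_mul] at ht
  calc 0 ≤ (t ^ 2)⁻¹ * (t * (T (x + t • h) - T x) h) :=
      mul_nonneg (inv_nonneg.2 (sq_nonneg t)) ht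
    _ = t⁻¹ * (T (x + t • h) - T x) h := by field_simp

variable {S : Set E}

theorem convexOn_comp_lineMap_of_fderiv2_nonneg {g : E → ℝ} {g' : E → E →L[ℝ] ℝ}
    {g'' : E → E →L[ℝ] E →L[ℝ] ℝ} (hSconv : Convex ℝ S)
    (hg : ∀ x ∈ S, HasFDerivAt g (g' x) x) (hg' : ∀ x ∈ S, HasFDerivAt g' (g'' x) x)
    (hnonneg : ∀ x ∈ S, ∀ h, 0 ≤ g'' x h h) {x y : E} (hx : x ∈ S) (hy : y ∈ S) :
    ConvexOn ℝ (Set.Icc (0 : ℝ) 1) (g ∘ AffineMap.lineMap x y) := by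
  have hmem : ∀ t ∈ Set.Icc (0 : ℝ) 1, AffineMap.lineMap x y t ∈ S :=
    fun t ht => hSconv.lineMap_mem hx hy ht
  have hderiv : ∀ t ∈ Set.Icc (0 : ℝ) 1, HasDerivAt (g ∘ AffineMap.lineMap x y)
      (g' (AffineMap.lineMap x y t) (y - x)) t :=
    fun t ht => (hg _ (hmem t ht)).comp_hasDerivAt t AffineMap.hasDerivAt_lineMap
  have hderiv2 : ∀ t ∈ Set.Icc (0 : ℝ) 1,
      HasDerivAt (fun s => g' (AffineMap.lineMap x y s) (y - x))
        (g'' (AffineMap.lineMap x y t) (y - x) (y - x)) t := fun t ht => by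
    simpa using ((hg' _ (hmem t ht)).comp_hasDerivAt t AffineMap.hasDerivAt_lineMap).clm_apply
      (hasDerivAt_const t (y - x))
  exact convexOn_of_hasDerivWithinAt2_nonneg (convex_Icc 0 1)
    (fun t ht => (hderiv t ht).continuousAt.continuousWithinAt)
    (fun t ht => (hderiv t (interior_subset ht)).hasDerivWithinAt)
    (fun t ht => (hderiv2 t (interior_subset ht)).hasDerivWithinAt)
    (fun t ht => hnonneg _ (hmem t (interior_subset ht)) _)

theorem bregmanDist_nonneg_of_convexOn_comp_lineMap {g : E → ℝ} {g' : E → E →L[ℝ] ℝ} {x y : E}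
    (hg : HasFDerivAt g (g' y) y)
    (hconv : ConvexOn ℝ (Set.Icc (0 : ℝ) 1) (g ∘ AffineMap.lineMap y x)) :
    0 ≤ bregmanDist g g' x y := by
  have hderiv : HasDerivAt (g ∘ AffineMap.lineMap y x) (g' y (x - y)) (0 : ℝ) :=
    HasFDerivAt.comp_hasDerivAt 0 (by simpa using hg) AffineMap.hasDerivAt_lineMap
  have htangent := hconv.le_slope_of_hasDerivAt (Set.left_mem_Icc.2 zero_le_one)
    (Set.right_mem_Icc.2 zero_le_one) zero_lt_one hderiv
  simpa [bregmanDist, slope_def_field] using htangent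

theorem bregmanDist_nonneg_iff_fderiv2_nonneg {g : E → ℝ} {g' : E → E →L[ℝ] ℝ}
    {g'' : E → E →L[ℝ] E →L[ℝ] ℝ} (hSopen : IsOpen S) (hSconv : Convex ℝ S)
    (hg : ∀ x ∈ S, HasFDerivAt g (g' x) x) (hg' : ∀ x ∈ S, HasFDerivAt g' (g'' x) x) :
    (∀ x ∈ S, ∀ y ∈ S, 0 ≤ bregmanDist g g' x y) ↔ ∀ x ∈ S, ∀ h, 0 ≤ g'' x h h := by
  constructor
  · intro hD x hx
    refine fderiv_nonneg_of_eventually_monotone (hg' x hx) ?_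
    filter_upwards [hSopen.mem_nhds hx] with y hy
    rw [← bregmanDist_add_bregmanDist_swap g g' y x]
    exact add_nonneg (hD y hy x hx) (hD x hx y hy)
  · intro hnonneg x hx y hy
    exact bregmanDist_nonneg_of_convexOn_comp_lineMap (hg y hy)
      (convexOn_comp_lineMap_of_fderiv2_nonneg hSconv hg hg' hnonneg hy hx)

theorem two_sided_descent_iff_hessian_psd_general (hSopen : IsOpen S) (hSconv : Convex ℝ S)
    {φ f : E → ℝ} {φ' f' : E → E →L[ℝ] ℝ} {φ'' f'' : E → E →L[ℝ] E →L[ℝ] ℝ}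
    (hφ : ∀ x ∈ S, HasFDerivAt φ (φ' x) x) (hf : ∀ x ∈ S, HasFDerivAt f (f' x) x)
    (hφ' : ∀ x ∈ S, HasFDerivAt φ' (φ'' x) x) (hf' : ∀ x ∈ S, HasFDerivAt f' (f'' x) x)
    (L : ℝ) :
    (∀ x ∈ S, ∀ y ∈ S, |bregmanDist f f' x y| ≤ L * bregmanDist φ φ' x y) ↔
      ∀ x ∈ S, ∀ h, 0 ≤ L * φ'' x h h + f'' x h h ∧ 0 ≤ L * φ'' x h h - f'' x h h := by
  have hadd := bregmanDist_nonneg_iff_fderiv2_nonneg (g' := L • φ' + f') hSopen hSconv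
    (fun x hx => ((hφ x hx).const_smul L).add (hf x hx))
    (fun x hx => ((hφ' x hx).const_smul L).add (hf' x hx))
  have hsub := bregmanDist_nonneg_iff_fderiv2_nonneg (g' := L • φ' - f') hSopen hSconv
    (fun x hx => ((hφ x hx).const_smul L).sub (hf x hx))
    (fun x hx => ((hφ' x hx).const_smul L).sub (hf' x hx))
  simpa only [abs_le_iff_add_nonneg_and_sub_nonneg, forall_and, bregmanDist_add,
    bregmanDist_sub, bregmanDist_const_smul, add_apply, sub_apply, smul_apply, smul_eq_mul]
    using and_congr hadd hsub

end Bregman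

theorem hasFDerivAt_innerSL_comp {E F : Type*} [NormedAddCommGroup E] [NormedSpace ℝ E]
    [NormedAddCommGroup F] [InnerProductSpace ℝ F] {G : E → F} {G' : E →L[ℝ] F} {x : E}
    (hG : HasFDerivAt G G' x) :
    HasFDerivAt (fun y => innerSL ℝ (G y)) ((innerSL ℝ : F →L[ℝ] F →L[ℝ] ℝ).comp G') x :=
  (innerSL ℝ : F →L[ℝ] F →L[ℝ] ℝ).hasFDerivAt.comp x hG

/-- for `C²` functions, the two-sided descent inequality with the Bregman
distance `D_φ` holds on `S` iff the Hessian bounds `L∇²φ(x) ± ∇²f(x) ⪰ 0` hold on `S`. -/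
theorem two_sided_descent_iff_hessian_psd {d : ℕ}
    (S : Set (EuclideanSpace ℝ (Fin d))) (hSne : S.Nonempty) (hSopen : IsOpen S)
    (hSconv : Convex ℝ S)
    (φ f : EuclideanSpace ℝ (Fin d) → ℝ)
    (φ' f' : EuclideanSpace ℝ (Fin d) → EuclideanSpace ℝ (Fin d))
    (φ'' f'' : EuclideanSpace ℝ (Fin d) →
      (EuclideanSpace ℝ (Fin d) →L[ℝ] EuclideanSpace ℝ (Fin d)))
    (hφdiff : ∀ x ∈ S, HasGradientAt φ (φ' x) x)
    (hfdiff : ∀ x ∈ S, HasGradientAt f (f' x) x)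
    (hφdiff2 : ∀ x ∈ S, HasFDerivAt φ' (φ'' x) x)
    (hfdiff2 : ∀ x ∈ S, HasFDerivAt f' (f'' x) x)
    (hφcont2 : ContinuousOn φ'' S)
    (hfcont2 : ContinuousOn f'' S)
    (hφconv : ConvexOn ℝ S φ)
    (L : ℝ) (hL : 0 < L) :
    (∀ x ∈ S, ∀ y ∈ S,
        abs (f x - f y - ⟪f' y, x - y⟫) ≤ L * (φ x - φ y - ⟪φ' y, x - y⟫)) ↔
      (∀ x ∈ S, ∀ h : EuclideanSpace ℝ (Fin d),
        0 ≤ L * ⟪φ'' x h, h⟫ + ⟪f'' x h, h⟫ ∧ 0 ≤ L * ⟪φ'' x h, h⟫ - ⟪f'' x h, h⟫) :=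
  -- `⟪u, v⟫` unfolds to `innerSL ℝ u v`, so gradients become derivatives with values in the dual.
  two_sided_descent_iff_hessian_psd_general hSopen hSconv hφdiff hfdiff
    (fun x hx => hasFDerivAt_innerSL_comp (hφdiff2 x hx))
    (fun x hx => hasFDerivAt_innerSL_comp (hfdiff2 x hx)) L
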